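/- For every natural number n, there is a bijection between the set of perfect matchings of the 2n-element set Fin n ⊕ Fin n (equivalently, the fixed-point-free involutions of Fin n ⊕ Fin n, or the partitions of this set into two-element blocks) and the set of triples (S₁, S₂, w), where S₁ and S₂ are involutive permutations of Fin n and w is a bijection from the set of fixed points of S₁ to the set of fixed points of S₂. The bijection sends a matching D to the triple in which S₁ interchanges the endpoints of each block contained in the first copy of Fin n (fixing all other points), S₂ interchanges the endpoints of each block contained in the second copy (fixing all other points), and w records the blocks with one endpoint in each copy. In particular, the number of fixed points of S₁ equals the number of fixed points of S₂ for every matching D. -/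

import Mathlib

/-!
A point `i` of the top row is fixed by the top involution exactly when its block crosses to the
bottom row, and symmetrically, so the crossing blocks are a bijection between the two sets of fixed
points. Conversely, a triple prescribes the partner of every point: a point moved by the involution
of its row is paired with its image, and a fixed point with its image under the bijection.
-/

/-- Brauer diagrams with top row `α` and bottom row `β`: perfect matchings of `α ⊕ β`, encoded as
fixed-point-free involutions. -/
abbrev BrauerDiagram (α β : Type*) : Type _ :=
  {D : Equiv.Perm (α ⊕ β) // (∀ x, D (D x) = x) ∧ ∀ x, D x ≠ x}

/-- Involutive permutations of `α`, the identity included: partial matchings of `α`, whose fixed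
points are the unmatched points. -/
abbrev InvolutivePerm (α : Type*) : Type _ :=
  {S : Equiv.Perm α // ∀ x, S (S x) = x}

/-- Triples `[S₁, S₂, w]`: an involution of each row and a bijection between their fixed points. -/
abbrev BrauerTriple (α β : Type*) : Type _ :=
  Σ S : InvolutivePerm α × InvolutivePerm β, ({x : α // S.1.1 x = x} ≃ {x : β // S.2.1 x = x})

namespace BrauerTriple

variable {α β : Type*}

theorem ext {t t' : BrauerTriple α β} (h₁ : ∀ i, t.1.1.1 i = t'.1.1.1 i)
    (h₂ : ∀ j, t.1.2.1 j = t'.1.2.1 j)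
    (hw : ∀ i hi hi', (t.2 ⟨i, hi⟩ : β) = t'.2 ⟨i, hi'⟩) : t = t' := by
  obtain ⟨⟨⟨S₁, hS₁⟩, ⟨S₂, hS₂⟩⟩, w⟩ := t
  obtain ⟨⟨⟨S₁', hS₁'⟩, ⟨S₂', hS₂'⟩⟩, w'⟩ := t'
  obtain rfl : S₁ = S₁' := Equiv.ext h₁
  obtain rfl : S₂ = S₂' := Equiv.ext h₂
  obtain rfl : w = w' := Equiv.ext fun i ↦ Subtype.ext (hw i i.2 i.2)
  rfl

variable [DecidableEq α] [DecidableEq β]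

/-- The point matched with a given point in the diagram of the triple `t`. -/
def partner (t : BrauerTriple α β) : α ⊕ β → α ⊕ β
  | .inl i => if h : t.1.1.1 i = i then .inr (t.2 ⟨i, h⟩) else .inl (t.1.1.1 i)
  | .inr j => if h : t.1.2.1 j = j then .inl (t.2.symm ⟨j, h⟩) else .inr (t.1.2.1 j)

variable (t : BrauerTriple α β) {i : α} {j : β}

theorem partner_inl_of_fixed (h : t.1.1.1 i = i) : t.partner (.inl i) = .inr ↑(t.2 ⟨i, h⟩) :=
  dif_pos h

theorem partner_inl_of_moved (h : t.1.1.1 i ≠ i) : t.partner (.inl i) = .inl (t.1.1.1 i) :=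
  dif_neg h

theorem partner_inr_of_fixed (h : t.1.2.1 j = j) : t.partner (.inr j) = .inl ↑(t.2.symm ⟨j, h⟩) :=
  dif_pos h

theorem partner_inr_of_moved (h : t.1.2.1 j ≠ j) : t.partner (.inr j) = .inr (t.1.2.1 j) :=
  dif_neg h

theorem partner_involutive : Function.Involutive t.partner := by
  rintro (i | j)
  · by_cases hi : t.1.1.1 i = i
    · simp [t.partner_inl_of_fixed hi, t.partner_inr_of_fixed (t.2 ⟨i, hi⟩).2]
    · have hSi : t.1.1.1 (t.1.1.1 i) ≠ t.1.1.1 i := t.1.1.1.injective.ne hi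
      rw [t.partner_inl_of_moved hi, t.partner_inl_of_moved hSi, t.1.1.2]
  · by_cases hj : t.1.2.1 j = j
    · simp [t.partner_inr_of_fixed hj, t.partner_inl_of_fixed (t.2.symm ⟨j, hj⟩).2]
    · have hSj : t.1.2.1 (t.1.2.1 j) ≠ t.1.2.1 j := t.1.2.1.injective.ne hj
      rw [t.partner_inr_of_moved hj, t.partner_inr_of_moved hSj, t.1.2.2]

theorem partner_ne (x : α ⊕ β) : t.partner x ≠ x := by
  obtain i | j := x
  · by_cases hi : t.1.1.1 i = i
    · simp [t.partner_inl_of_fixed hi]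
    · simpa [t.partner_inl_of_moved hi] using hi
  · by_cases hj : t.1.2.1 j = j
    · simp [t.partner_inr_of_fixed hj]
    · simpa [t.partner_inr_of_moved hj] using hj

/-- The Brauer diagram whose blocks are the pairs `{x, t.partner x}`. -/
def toDiagram : BrauerDiagram α β :=
  ⟨t.partner_involutive.toPerm, t.partner_involutive, t.partner_ne⟩

end BrauerTriple

namespace BrauerDiagram

variable {α β : Type*} (D : BrauerDiagram α β) {i i' : α} {j j' : β}

/-- The Brauer diagram with its two rows interchanged. -/
def swap : BrauerDiagram β α :=
  ⟨(Equiv.sumComm α β).permCongr D.1, by simp [D.2.1], fun x hx ↦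
    D.2.2 x.swap (by simpa using congrArg Sum.swap hx)⟩

theorem swap_apply (x : β ⊕ α) : D.swap.1 x = (D.1 x.swap).swap :=
  rfl

/-- The involution of the top row that interchanges the endpoints of each block contained in that
row, and fixes the endpoints of the crossing blocks. -/
def topPerm : InvolutivePerm α :=
  have involutive : Function.Involutive fun i ↦ Sum.elim id (fun _ ↦ i) (D.1 (.inl i)) := fun i ↦ by
    rcases h : D.1 (.inl i) with i' | j
    · have h' : D.1 (.inl i') = .inl i := by rw [← h, D.2.1]
      simp only [h, h', Sum.elim_inl, id_eq]
    · simp only [h, Sum.elim_inr]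
  ⟨involutive.toPerm, involutive⟩

theorem topPerm_apply (i : α) : D.topPerm.1 i = Sum.elim id (fun _ ↦ i) (D.1 (.inl i)) :=
  rfl

/-- The analogue of `BrauerDiagram.topPerm` for the bottom row. -/
def bottomPerm : InvolutivePerm β :=
  D.swap.topPerm

variable {D}

theorem topPerm_apply_of_eq_inl (h : D.1 (.inl i) = .inl i') : D.topPerm.1 i = i' := by
  rw [topPerm_apply, h, Sum.elim_inl, id]

theorem topPerm_apply_of_eq_inr (h : D.1 (.inl i) = .inr j) : D.topPerm.1 i = i := by
  rw [topPerm_apply, h, Sum.elim_inr]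

theorem bottomPerm_apply_of_eq_inr (h : D.1 (.inr j) = .inr j') : D.bottomPerm.1 j = j' :=
  topPerm_apply_of_eq_inl (D := D.swap) (congrArg Sum.swap h)

theorem bottomPerm_apply_of_eq_inl (h : D.1 (.inr j) = .inl i) : D.bottomPerm.1 j = j :=
  topPerm_apply_of_eq_inr (D := D.swap) (congrArg Sum.swap h)

theorem topPerm_apply_eq_self_iff : D.topPerm.1 i = i ↔ (D.1 (.inl i)).isRight := by
  rcases h : D.1 (.inl i) with i' | j
  · have hne : i' ≠ i := fun hi ↦ D.2.2 (.inl i) (h.trans (congrArg _ hi))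
    simpa [topPerm_apply_of_eq_inl h] using hne
  · simpa using topPerm_apply_of_eq_inr h

theorem bottomPerm_apply_eq_self_iff : D.bottomPerm.1 j = j ↔ (D.1 (.inr j)).isLeft := by
  simp [bottomPerm, topPerm_apply_eq_self_iff, swap_apply]

variable (D)

/-- The bijection given by the crossing blocks, from their top to their bottom endpoints. -/
def crossing : {i // (D.1 (.inl i)).isRight} ≃ {j // (D.1 (.inr j)).isLeft} where
  toFun i := ⟨(D.1 (.inl i)).getRight i.2, by simp [D.2.1]⟩
  invFun j := ⟨(D.1 (.inr j)).getLeft j.2, by simp [D.2.1]⟩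
  left_inv i := by simp [D.2.1]
  right_inv j := by simp [D.2.1]

/-- The triple `[S₁, S₂, w]` of the diagram `D`. -/
def toTriple : BrauerTriple α β :=
  ⟨(D.topPerm, D.bottomPerm),
    (Equiv.subtypeEquivRight fun _ ↦ topPerm_apply_eq_self_iff).trans <|
      D.crossing.trans (Equiv.subtypeEquivRight fun _ ↦ bottomPerm_apply_eq_self_iff).symm⟩

theorem apply_inl_eq_inr_toTriple (i : {i // D.topPerm.1 i = i}) :
    D.1 (.inl i) = .inr ↑(D.toTriple.2 i) :=
  (Sum.inr_getRight _ (topPerm_apply_eq_self_iff.1 i.2)).symm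

theorem apply_inr_eq_inl_toTriple_symm (j : {j // D.bottomPerm.1 j = j}) :
    D.1 (.inr j) = .inl ↑(D.toTriple.2.symm j) :=
  (Sum.inl_getLeft _ (bottomPerm_apply_eq_self_iff.1 j.2)).symm

variable [DecidableEq α] [DecidableEq β]

theorem partner_toTriple (x : α ⊕ β) : D.toTriple.partner x = D.1 x := by
  obtain i | j := x
  · by_cases hi : D.topPerm.1 i = i
    · exact (D.toTriple.partner_inl_of_fixed hi).trans (D.apply_inl_eq_inr_toTriple ⟨i, hi⟩).symm
    · obtain ⟨i', h⟩ : ∃ i', D.1 (.inl i) = .inl i' := by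
        rwa [topPerm_apply_eq_self_iff, Sum.not_isRight, Sum.isLeft_iff] at hi
      rw [D.toTriple.partner_inl_of_moved hi, h]
      exact congrArg _ (topPerm_apply_of_eq_inl h)
  · by_cases hj : D.bottomPerm.1 j = j
    · exact (D.toTriple.partner_inr_of_fixed hj).trans
        (D.apply_inr_eq_inl_toTriple_symm ⟨j, hj⟩).symm
    · obtain ⟨j', h⟩ : ∃ j', D.1 (.inr j) = .inr j' := by
        rwa [bottomPerm_apply_eq_self_iff, Sum.not_isLeft, Sum.isRight_iff] at hj
      rw [D.toTriple.partner_inr_of_moved hj, h]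
      exact congrArg _ (bottomPerm_apply_of_eq_inr h)

theorem toDiagram_toTriple : D.toTriple.toDiagram = D :=
  Subtype.ext (Equiv.ext D.partner_toTriple)

variable (t : BrauerTriple α β)

theorem topPerm_toDiagram (i : α) : t.toDiagram.topPerm.1 i = t.1.1.1 i := by
  by_cases hi : t.1.1.1 i = i
  · exact (topPerm_apply_of_eq_inr (t.partner_inl_of_fixed hi)).trans hi.symm
  · exact topPerm_apply_of_eq_inl (t.partner_inl_of_moved hi)

theorem bottomPerm_toDiagram (j : β) : t.toDiagram.bottomPerm.1 j = t.1.2.1 j := by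
  by_cases hj : t.1.2.1 j = j
  · exact (bottomPerm_apply_of_eq_inl (t.partner_inr_of_fixed hj)).trans hj.symm
  · exact bottomPerm_apply_of_eq_inr (t.partner_inr_of_moved hj)

theorem toTriple_toDiagram : t.toDiagram.toTriple = t :=
  BrauerTriple.ext (topPerm_toDiagram t) (bottomPerm_toDiagram t) fun i hi hi' ↦
    Sum.inr_injective <| (t.toDiagram.apply_inl_eq_inr_toTriple ⟨i, hi⟩).symm.trans
      (t.partner_inl_of_fixed hi')

/-- The parametrization of Brauer diagrams by triples `[S₁, S₂, w]`. -/
def equivTriple : BrauerDiagram α β ≃ BrauerTriple α β where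
  toFun := toTriple
  invFun := BrauerTriple.toDiagram
  left_inv D := D.toDiagram_toTriple
  right_inv := toTriple_toDiagram

end BrauerDiagram

theorem brauer_diagram_triple_parametrization_general (α β : Type*) :
    ∃ Φ : BrauerDiagram α β ≃ BrauerTriple α β, ∀ D : BrauerDiagram α β,
      (∀ i i' : α, D.1 (Sum.inl i) = Sum.inl i' → (Φ D).1.1.1 i = i') ∧
      (∀ (i : α) (j : β), D.1 (Sum.inl i) = Sum.inr j → (Φ D).1.1.1 i = i) ∧
      (∀ j j' : β, D.1 (Sum.inr j) = Sum.inr j' → (Φ D).1.2.1 j = j') ∧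
      (∀ (j : β) (i : α), D.1 (Sum.inr j) = Sum.inl i → (Φ D).1.2.1 j = j) ∧
      (∀ x : {x : α // (Φ D).1.1.1 x = x}, D.1 (Sum.inl x.1) = Sum.inr ((Φ D).2 x).1) ∧
      Nat.card {x : α // (Φ D).1.1.1 x = x} = Nat.card {x : β // (Φ D).1.2.1 x = x} := by
  classical
  exact ⟨BrauerDiagram.equivTriple, fun D ↦
    ⟨fun _ _ ↦ BrauerDiagram.topPerm_apply_of_eq_inl,
      fun _ _ ↦ BrauerDiagram.topPerm_apply_of_eq_inr,
      fun _ _ ↦ BrauerDiagram.bottomPerm_apply_of_eq_inr,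
      fun _ _ ↦ BrauerDiagram.bottomPerm_apply_of_eq_inl,
      D.apply_inl_eq_inr_toTriple, Nat.card_congr D.toTriple.2⟩⟩

/-- For every natural number `n`, there is a bijection between the set
of perfect matchings of the `2n`-element set `Fin n ⊕ Fin n` (equivalently, the
fixed-point-free involutions `D` of `Fin n ⊕ Fin n`) and the set of triples
`(S₁, S₂, w)` where `S₁, S₂` are involutive permutations of `Fin n` and `w` is a
bijection from the fixed points of `S₁` to the fixed points of `S₂`.  The bijection
sends a matching `D` to the triple in which `S₁` interchanges the endpoints of each
block contained in the first copy of `Fin n` (fixing all other points), `S₂` does the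
same for the second copy, and `w` records the blocks with one endpoint in each copy.
In particular, the number of fixed points of `S₁` equals the number of fixed points of
`S₂` for every matching `D`. -/
theorem brauer_diagram_triple_parametrization (n : ℕ) :
    ∃ Φ : {D : Equiv.Perm (Fin n ⊕ Fin n) // (∀ x, D (D x) = x) ∧ ∀ x, D x ≠ x} ≃
        (Σ S : {S : Equiv.Perm (Fin n) // ∀ x, S (S x) = x} ×
               {S : Equiv.Perm (Fin n) // ∀ x, S (S x) = x},
          ({x : Fin n // S.1.1 x = x} ≃ {x : Fin n // S.2.1 x = x})),
      ∀ D : {D : Equiv.Perm (Fin n ⊕ Fin n) // (∀ x, D (D x) = x) ∧ ∀ x, D x ≠ x},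
        (∀ i j : Fin n, D.1 (Sum.inl i) = Sum.inl j → (Φ D).1.1.1 i = j) ∧
        (∀ i j : Fin n, D.1 (Sum.inl i) = Sum.inr j → (Φ D).1.1.1 i = i) ∧
        (∀ i j : Fin n, D.1 (Sum.inr i) = Sum.inr j → (Φ D).1.2.1 i = j) ∧
        (∀ i j : Fin n, D.1 (Sum.inr i) = Sum.inl j → (Φ D).1.2.1 i = i) ∧
        (∀ x : {x : Fin n // (Φ D).1.1.1 x = x},
          D.1 (Sum.inl x.1) = Sum.inr ((Φ D).2 x).1) ∧
        Nat.card {x : Fin n // (Φ D).1.1.1 x = x} =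
          Nat.card {x : Fin n // (Φ D).1.2.1 x = x} :=
  brauer_diagram_triple_parametrization_general (Fin n) (Fin n)
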